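/- arXiv:2111.15497 — 6 statements merged into one kernel-verified Lean document; each statement's English description precedes it below -/
import Mathlib

section
/- Let Λ : ℝ → ℝ^d be C¹ and exponentially bi-asymptotically constant with decay coefficient ρ > 0, and suppose Λ(τ) → λ⁺ as τ → +∞ and Λ(τ) → λ⁻ as τ → −∞. Then for every α ∈ (0, ρ], the function Λ_α : [−1,1] → ℝ^d, defined by Λ_α(s) = Λ(h_α(s)) for s ∈ (−1,1), Λ_α(1) = λ⁺ and Λ_α(−1) = λ⁻, is continuously differentiable on the closed interval [−1,1]. -/
open Filter Topology

/-- The time compactification map `g_α(τ) = tanh(ατ/2)`. -/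
noncomputable def gcomp (α τ : ℝ) : ℝ := Real.tanh (α * τ / 2)

/-- Its inverse `h_α(s) = (1/α)·ln((1+s)/(1-s))`. -/
noncomputable def hcomp (α s : ℝ) : ℝ := (1 / α) * Real.log ((1 + s) / (1 - s))

/-- `Λ : ℝ → ℝ^d` is exponentially bi-asymptotically constant with decay coefficient `ρ`:
both limits `lim_{τ→+∞} Λ'(τ)·e^{ρτ}` and `lim_{τ→-∞} Λ'(τ)·e^{-ρτ}` exist. -/
def ExpBiAsympConst {d : ℕ} (Λ : ℝ → Fin d → ℝ) (ρ : ℝ) : Prop :=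
  (∃ Lp : Fin d → ℝ, Tendsto (fun τ => Real.exp (ρ * τ) • deriv Λ τ) atTop (𝓝 Lp)) ∧
  (∃ Lm : Fin d → ℝ, Tendsto (fun τ => Real.exp (-ρ * τ) • deriv Λ τ) atBot (𝓝 Lm))

/-- The compactified input `Λ_α : [-1,1] → ℝ^d`, equal to `Λ ∘ h_α` on `(-1,1)` and to the
future/past limits `lp`, `lm` at `s = 1`, `s = -1` respectively. -/
noncomputable def compInput {d : ℕ} (Λ : ℝ → Fin d → ℝ) (lp lm : Fin d → ℝ)
    (α s : ℝ) : Fin d → ℝ :=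
  if s = 1 then lp else if s = -1 then lm else Λ (hcomp α s)


lemma aux_top {d : ℕ} {f : ℝ → Fin d → ℝ} {ρ α : ℝ} (hα : α ≤ ρ)
    (h : ∃ L : Fin d → ℝ, Tendsto (fun τ => Real.exp (ρ * τ) • f τ) atTop (𝓝 L)) :
    ∃ L : Fin d → ℝ, Tendsto (fun τ => Real.exp (α * τ) • f τ) atTop (𝓝 L) := by
  obtain ⟨L, hL⟩ := h
  rcases hα.eq_or_lt with rfl | hlt
  · exact ⟨L, hL⟩
  · refine ⟨(0 : ℝ) • L, ?_⟩
    have h1 : Tendsto (fun τ : ℝ => Real.exp ((α - ρ) * τ)) atTop (𝓝 0) :=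
      Real.tendsto_exp_atBot.comp (tendsto_id.const_mul_atTop_of_neg (by linarith))
    refine (h1.smul hL).congr fun τ => ?_
    rw [smul_smul, ← Real.exp_add]
    congr 2
    ring

lemma aux_bot {d : ℕ} {f : ℝ → Fin d → ℝ} {ρ α : ℝ} (hα : α ≤ ρ)
    (h : ∃ L : Fin d → ℝ, Tendsto (fun τ => Real.exp (-ρ * τ) • f τ) atBot (𝓝 L)) :
    ∃ L : Fin d → ℝ, Tendsto (fun τ => Real.exp (-α * τ) • f τ) atBot (𝓝 L) := by
  obtain ⟨L, hL⟩ := h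
  obtain ⟨M, hM⟩ := aux_top (f := fun τ => f (-τ)) hα
    ⟨L, (hL.comp tendsto_neg_atTop_atBot).congr fun τ => by simp⟩
  exact ⟨M, (hM.comp tendsto_neg_atBot_atTop).congr fun τ => by simp⟩

lemma h_top {α : ℝ} (hα : 0 < α) : Tendsto (hcomp α) (𝓝[<] 1) atTop := by
  unfold hcomp
  refine Tendsto.const_mul_atTop (by positivity) (Real.tendsto_log_atTop.comp ?_)
  have h1 : Tendsto (fun s : ℝ => 1 + s) (𝓝[<] 1) (𝓝 2) := by
    have : ContinuousAt (fun s : ℝ => 1 + s) 1 := by fun_prop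
    have h := this.tendsto.mono_left (nhdsWithin_le_nhds (s := Set.Iio 1))
    norm_num at h
    exact h
  have h2 : Tendsto (fun s : ℝ => (1 - s)⁻¹) (𝓝[<] 1) atTop := by
    refine tendsto_inv_nhdsGT_zero.comp (tendsto_nhdsWithin_iff.2 ⟨?_, ?_⟩)
    · have : ContinuousAt (fun s : ℝ => 1 - s) 1 := by fun_prop
      have h := this.tendsto.mono_left (nhdsWithin_le_nhds (s := Set.Iio 1))
      norm_num at h
      exact h
    · filter_upwards [self_mem_nhdsWithin] with s hs
      simpa using hs
  simpa [div_eq_mul_inv] using h1.pos_mul_atTop two_pos h2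

lemma h_neg (α s : ℝ) : hcomp α (-s) = - hcomp α s := by
  unfold hcomp
  rw [← mul_neg, ← Real.log_inv, inv_div]
  simp [sub_eq_add_neg]

lemma neg_lim : Tendsto (fun s : ℝ => -s) (𝓝[>] (-1)) (𝓝[<] 1) := by
  refine tendsto_nhdsWithin_iff.2 ⟨?_, ?_⟩
  · have : ContinuousAt (fun s : ℝ => -s) (-1) := by fun_prop
    have h := this.tendsto.mono_left (nhdsWithin_le_nhds (s := Set.Ioi (-1)))
    norm_num at h
    exact h
  · filter_upwards [self_mem_nhdsWithin] with s hs
    have : -1 < s := hs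
    show -s < 1
    linarith

lemma h_bot {α : ℝ} (hα : 0 < α) : Tendsto (hcomp α) (𝓝[>] (-1)) atBot := by
  have := tendsto_neg_atTop_atBot.comp ((h_top hα).comp neg_lim)
  refine this.congr fun s => ?_
  simp [h_neg]

lemma h_exp {α s : ℝ} (hα : 0 < α) (h1 : -1 < s) (h2 : s < 1) :
    Real.exp (α * hcomp α s) = (1 + s) / (1 - s) := by
  unfold hcomp
  rw [← mul_assoc, mul_one_div_cancel hα.ne', one_mul, Real.exp_log]
  exact div_pos (by linarith) (by linarith)

lemma h_deriv {α s : ℝ} (h1 : -1 < s) (h2 : s < 1) :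
    HasDerivAt (hcomp α) (2 / (α * ((1 + s) * (1 - s)))) s := by
  have a : (1 + s) ≠ 0 := by linarith
  have b : (1 - s) ≠ 0 := by linarith
  have := ((((hasDerivAt_id s).const_add 1).div ((hasDerivAt_id s).const_sub 1) b).log
    (div_ne_zero a b)).const_mul (1 / α)
  refine this.congr_deriv ?_
  simp only [id, Pi.div_apply]
  by_cases hα : α = 0
  · simp [hα]
  field_simp
  ring

set_option maxHeartbeats 1000000 in
theorem stmt0 {d : ℕ} (Λ : ℝ → Fin d → ℝ) (ρ : ℝ) (hρ : 0 < ρ)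
    (hΛ : ContDiff ℝ 1 Λ) (hbac : ExpBiAsympConst Λ ρ)
    (lp lm : Fin d → ℝ)
    (hp : Tendsto Λ atTop (𝓝 lp)) (hm : Tendsto Λ atBot (𝓝 lm)) :
    ∀ α ∈ Set.Ioc (0 : ℝ) ρ,
      ContDiffOn ℝ 1 (compInput Λ lp lm α) (Set.Icc (-1) 1) := by
  rintro α ⟨hα, hαρ⟩
  obtain ⟨Lp, hLp⟩ := aux_top hαρ hbac.1
  obtain ⟨Lm, hLm⟩ := aux_bot hαρ hbac.2
  set F := compInput Λ lp lm α with hF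
  let G : ℝ → Fin d → ℝ := fun s => (2 / (α * ((1 + s) * (1 - s)))) • deriv Λ (hcomp α s)
  have hI1 : Set.Ioo (-1 : ℝ) 1 ∈ 𝓝[<] (1 : ℝ) := Ioo_mem_nhdsLT (by norm_num)
  have hI2 : Set.Ioo (-1 : ℝ) 1 ∈ 𝓝[>] (-1 : ℝ) := Ioo_mem_nhdsGT (by norm_num)
  have hFeq : ∀ s ∈ Set.Ioo (-1 : ℝ) 1, F s = Λ (hcomp α s) := by
    intro s hs
    simp [hF, compInput, hs.1.ne', hs.2.ne]
  have hF1 : F 1 = lp := by simp [hF, compInput]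
  have hFm1 : F (-1) = lm := by
    have : (-1 : ℝ) ≠ 1 := by norm_num
    simp [hF, compInput, this]
  have hFd : ∀ s ∈ Set.Ioo (-1 : ℝ) 1, HasDerivAt F (G s) s := by
    intro s hs
    have h1 := ((hΛ.differentiable one_ne_zero) (hcomp α s)).hasDerivAt.scomp s
      (h_deriv (α := α) hs.1 hs.2)
    refine h1.congr_of_eventuallyEq ?_
    filter_upwards [isOpen_Ioo.mem_nhds hs] with t ht using hFeq t ht
  have hGc : ∀ s ∈ Set.Ioo (-1 : ℝ) 1, ContinuousAt G s := by
    intro s hs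
    have a : (1 + s) ≠ 0 := by linarith [hs.1]
    have b : (1 - s) ≠ 0 := by linarith [hs.2]
    have h1 : ContinuousAt (fun s => deriv Λ (hcomp α s)) s :=
      (hΛ.continuous_deriv le_rfl).continuousAt.comp (h_deriv hs.1 hs.2).continuousAt
    have h2 : ContinuousAt (fun s : ℝ => 2 / (α * ((1 + s) * (1 - s)))) s :=
      ContinuousAt.div (by fun_prop) (by fun_prop) (mul_ne_zero hα.ne' (mul_ne_zero a b))
    exact h2.smul h1
  have hG1 : Tendsto G (𝓝[<] 1) (𝓝 ((2 / (α * (1 + 1) ^ 2)) • Lp)) := by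
    have c : ContinuousAt (fun s : ℝ => 2 / (α * (1 + s) ^ 2)) 1 :=
      ContinuousAt.div (by fun_prop) (by fun_prop) (by positivity)
    have c' : Tendsto (fun s : ℝ => 2 / (α * (1 + s) ^ 2)) (𝓝[<] 1)
        (𝓝 (2 / (α * (1 + 1) ^ 2))) := c.tendsto.mono_left nhdsWithin_le_nhds
    refine (c'.smul (hLp.comp (h_top hα))).congr' ?_
    filter_upwards [hI1] with s hs
    have a : (1 + s) ≠ 0 := by linarith [hs.1]
    have b : (1 - s) ≠ 0 := by linarith [hs.2]
    simp only [Function.comp, G, h_exp hα hs.1 hs.2, smul_smul]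
    congr 1
    field_simp
  have hGm1 : Tendsto G (𝓝[>] (-1)) (𝓝 ((2 / (α * (1 - (-1)) ^ 2)) • Lm)) := by
    have c : ContinuousAt (fun s : ℝ => 2 / (α * (1 - s) ^ 2)) (-1) :=
      ContinuousAt.div (by fun_prop) (by fun_prop) (by norm_num; positivity)
    have c' : Tendsto (fun s : ℝ => 2 / (α * (1 - s) ^ 2)) (𝓝[>] (-1))
        (𝓝 (2 / (α * (1 - (-1)) ^ 2))) := c.tendsto.mono_left nhdsWithin_le_nhds
    refine (c'.smul (hLm.comp (h_bot hα))).congr' ?_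
    filter_upwards [hI2] with s hs
    have a : (1 + s) ≠ 0 := by linarith [hs.1]
    have b : (1 - s) ≠ 0 := by linarith [hs.2]
    simp only [Function.comp, G, neg_mul, Real.exp_neg, h_exp hα hs.1 hs.2, smul_smul]
    congr 1
    field_simp
  have hdiff : DifferentiableOn ℝ F (Set.Ioo (-1) 1) :=
    fun s hs => (hFd s hs).differentiableAt.differentiableWithinAt
  have hFt1 : Tendsto F (𝓝[<] 1) (𝓝 (F 1)) := by
    rw [hF1]
    refine (hp.comp (h_top hα)).congr' ?_
    filter_upwards [hI1] with s hs using (hFeq s hs).symm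
  have hFtm1 : Tendsto F (𝓝[>] (-1)) (𝓝 (F (-1))) := by
    rw [hFm1]
    refine (hm.comp (h_bot hα)).congr' ?_
    filter_upwards [hI2] with s hs using (hFeq s hs).symm
  have hD1 := hasDerivWithinAt_Iic_of_tendsto_deriv hdiff
    (hFt1.mono_left (nhdsWithin_mono _ fun s hs => hs.2)) hI1
    (hG1.congr' (by filter_upwards [hI1] with s hs using (hFd s hs).deriv.symm))
  have hDm1 := hasDerivWithinAt_Ici_of_tendsto_deriv hdiff
    (hFtm1.mono_left (nhdsWithin_mono _ fun s hs => hs.1)) hI2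
    (hGm1.congr' (by filter_upwards [hI2] with s hs using (hFd s hs).deriv.symm))
  have hu : UniqueDiffOn ℝ (Set.Icc (-1 : ℝ) 1) := uniqueDiffOn_Icc (by norm_num)
  have hD1' := hD1.mono (Set.Icc_subset_Iic_self : Set.Icc (-1 : ℝ) 1 ⊆ _)
  have hDm1' := hDm1.mono (Set.Icc_subset_Ici_self : Set.Icc (-1 : ℝ) 1 ⊆ _)
  have hD : ∀ s ∈ Set.Ioo (-1 : ℝ) 1, derivWithin F (Set.Icc (-1) 1) s = G s := fun s hs =>
    (hFd s hs).hasDerivWithinAt.derivWithin (hu s ⟨hs.1.le, hs.2.le⟩)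
  have hcases : ∀ s ∈ Set.Icc (-1 : ℝ) 1, s = -1 ∨ s = 1 ∨ s ∈ Set.Ioo (-1 : ℝ) 1 := by
    intro s hs
    rcases hs.1.eq_or_lt with h | h
    · exact Or.inl h.symm
    rcases hs.2.eq_or_lt with h' | h'
    · exact Or.inr (Or.inl h')
    · exact Or.inr (Or.inr ⟨h, h'⟩)
  rw [contDiffOn_one_iff_derivWithin hu]
  refine ⟨fun s hs => ?_, fun s hs => ?_⟩
  · rcases hcases s hs with rfl | rfl | h
    · exact hDm1'.differentiableWithinAt
    · exact hD1'.differentiableWithinAt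
    · exact (hFd s h).differentiableAt.differentiableWithinAt
  · rcases hcases s hs with rfl | rfl | h
    · refine ContinuousWithinAt.mono (t := Set.Ici (-1)) ?_ fun s hs => hs.1
      rw [← continuousWithinAt_Ioi_iff_Ici, ContinuousWithinAt, hDm1'.derivWithin (hu _ hs)]
      exact hGm1.congr' (by filter_upwards [hI2] with s hs using (hD s hs).symm)
    · refine ContinuousWithinAt.mono (t := Set.Iic 1) ?_ fun s hs => hs.2
      rw [← continuousWithinAt_Iio_iff_Iic, ContinuousWithinAt, hD1'.derivWithin (hu _ hs)]
      exact hG1.congr' (by filter_upwards [hI1] with s hs using (hD s hs).symm)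
    · refine ((hGc s h).congr ?_).continuousWithinAt
      filter_upwards [isOpen_Ioo.mem_nhds h] with t ht using (hD t ht).symm
end

section
/- Let f : ℝⁿ × ℝ^d → ℝⁿ be C¹, and let Λ : ℝ → ℝ^d be C¹ and exponentially bi-asymptotically constant with decay coefficient ρ > 0, with Λ(τ) → λ⁺ as τ → +∞ and Λ(τ) → λ⁻ as τ → −∞. Then for every α ∈ (0, ρ] and every r > 0, the compactified vector field F_{r,α}(x,s) = ( f(x, Λ_α(s))/r , α(1−s²)/2 ) is continuously differentiable on ℝⁿ × [−1,1]. -/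
open Filter Topology

/-- The compactified vector field `F_{r,α}(x,s) = (f(x,Λ_α(s))/r, α(1-s²)/2)` on `ℝⁿ × [-1,1]`. -/
noncomputable def compField {n d : ℕ} (f : (Fin n → ℝ) × (Fin d → ℝ) → Fin n → ℝ)
    (Λ : ℝ → Fin d → ℝ) (lp lm : Fin d → ℝ) (r α : ℝ) :
    (Fin n → ℝ) × ℝ → (Fin n → ℝ) × ℝ :=
  fun p => (r⁻¹ • f (p.1, compInput Λ lp lm α p.2), α * (1 - p.2 ^ 2) / 2)

/-- The extended phase space `ℝⁿ × [-1,1]`. -/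
def compDomain (n : ℕ) : Set ((Fin n → ℝ) × ℝ) := Set.univ ×ˢ Set.Icc (-1) 1

/-- General `C¹` extension criterion on `[-1,1]`. -/
lemma contDiffOn_Icc_of_limits {E : Type*} [NormedAddCommGroup E] [NormedSpace ℝ E]
    (c : ℝ → E) (h1 : ∀ s ∈ Set.Ioo (-1 : ℝ) 1, ContDiffAt ℝ 1 c s)
    (hcp : Tendsto c (𝓝[<] 1) (𝓝 (c 1))) (hcm : Tendsto c (𝓝[>] (-1)) (𝓝 (c (-1))))
    (Dp Dm : E) (hDp : Tendsto (deriv c) (𝓝[<] 1) (𝓝 Dp))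
    (hDm : Tendsto (deriv c) (𝓝[>] (-1)) (𝓝 Dm)) :
    ContDiffOn ℝ 1 c (Set.Icc (-1) 1) := by
  have hlt : (-1 : ℝ) < 1 := by norm_num
  have hU : UniqueDiffOn ℝ (Set.Icc (-1 : ℝ) 1) := uniqueDiffOn_Icc hlt
  have hdiff : DifferentiableOn ℝ c (Set.Ioo (-1 : ℝ) 1) := fun s hs =>
    ((h1 s hs).differentiableAt (by norm_num)).differentiableWithinAt
  have hdp : HasDerivWithinAt c Dp (Set.Icc (-1) 1) 1 := by
    refine (hasDerivWithinAt_Iic_of_tendsto_deriv hdiff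
      (hcp.mono_left (nhdsWithin_mono _ fun s hs => hs.2)) (Ioo_mem_nhdsLT hlt) hDp).mono
      fun s hs => hs.2
  have hdm : HasDerivWithinAt c Dm (Set.Icc (-1) 1) (-1) := by
    refine (hasDerivWithinAt_Ici_of_tendsto_deriv hdiff
      (hcm.mono_left (nhdsWithin_mono _ fun s hs => hs.1)) (Ioo_mem_nhdsGT hlt) hDm).mono
      fun s hs => hs.1
  have hev : ∀ s ∈ Set.Ioo (-1 : ℝ) 1, derivWithin c (Set.Icc (-1) 1) s = deriv c s :=
    fun s hs => derivWithin_of_mem_nhds (Icc_mem_nhds hs.1 hs.2)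
  rw [contDiffOn_one_iff_derivWithin hU]
  constructor
  · intro s hs
    rcases eq_or_lt_of_le hs.1 with h | h
    · subst h; exact hdm.differentiableWithinAt
    rcases eq_or_lt_of_le hs.2 with h' | h'
    · subst h'; exact hdp.differentiableWithinAt
    exact ((h1 s ⟨h, h'⟩).differentiableAt (by norm_num)).differentiableWithinAt
  · intro s hs
    rcases eq_or_lt_of_le hs.1 with h | h
    · subst h
      rw [continuousWithinAt_Icc_iff_Ici hlt, ← continuousWithinAt_Ioi_iff_Ici]
      unfold ContinuousWithinAt
      rw [hdm.derivWithin (hU _ hs)]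
      refine hDm.congr' ?_
      filter_upwards [Ioo_mem_nhdsGT hlt] with t ht
      exact (hev t ht).symm
    rcases eq_or_lt_of_le hs.2 with h' | h'
    · subst h'
      rw [continuousWithinAt_Icc_iff_Iic hlt, ← continuousWithinAt_Iio_iff_Iic]
      unfold ContinuousWithinAt
      rw [hdp.derivWithin (hU _ hs)]
      refine hDp.congr' ?_
      filter_upwards [Ioo_mem_nhdsLT hlt] with t ht
      exact (hev t ht).symm
    · have hc : ContinuousAt (deriv c) s := by
        have hon : ContDiffOn ℝ 1 c (Set.Ioo (-1 : ℝ) 1) :=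
          fun t ht => (h1 t ht).contDiffWithinAt
        exact (hon.continuousOn_deriv_of_isOpen isOpen_Ioo le_rfl).continuousAt
          (Ioo_mem_nhds h h')
      refine ContinuousAt.continuousWithinAt (hc.congr ?_)
      filter_upwards [Ioo_mem_nhds h h'] with t ht
      exact (hev t ht).symm

lemma hcomp_contDiffAt (α s : ℝ) (hs : s ∈ Set.Ioo (-1 : ℝ) 1) :
    ContDiffAt ℝ 1 (hcomp α) s := by
  have h1 : 0 < 1 + s := by linarith [hs.1]
  have h2 : 0 < 1 - s := by linarith [hs.2]
  unfold hcomp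
  refine contDiffAt_const.mul (ContDiffAt.log (ContDiffAt.div (by fun_prop) (by fun_prop) h2.ne') ?_)
  positivity

lemma hcomp_hasDerivAt (α s : ℝ) (hs : s ∈ Set.Ioo (-1 : ℝ) 1) :
    HasDerivAt (hcomp α) ((1 / α) * (2 / ((1 + s) * (1 - s)))) s := by
  have h1 : 0 < 1 + s := by linarith [hs.1]
  have h2 : 0 < 1 - s := by linarith [hs.2]
  unfold hcomp
  refine HasDerivAt.const_mul _ ?_
  have h3 : HasDerivAt (fun t : ℝ => 1 + t) 1 s := (hasDerivAt_id' s).const_add 1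
  have h4 : HasDerivAt (fun t : ℝ => 1 - t) (-1) s := (hasDerivAt_id' s).const_sub 1
  have h5 : HasDerivAt (fun t : ℝ => (1 + t) / (1 - t))
      ((1 * (1 - s) - (1 + s) * (-1)) / (1 - s) ^ 2) s := h3.div h4 h2.ne'
  have h6 := h5.log (div_pos h1 h2).ne'
  have h7 : 2 / ((1 + s) * (1 - s)) =
      (1 * (1 - s) - (1 + s) * (-1)) / (1 - s) ^ 2 / ((1 + s) / (1 - s)) := by
    field_simp
    ring
  rw [h7]
  exact h6

lemma exp_hcomp (α s : ℝ) (hα : 0 < α) (hs : s ∈ Set.Ioo (-1 : ℝ) 1) :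
    Real.exp (α * hcomp α s) = (1 + s) / (1 - s) := by
  have h1 : 0 < 1 + s := by linarith [hs.1]
  have h2 : 0 < 1 - s := by linarith [hs.2]
  unfold hcomp
  rw [← mul_assoc, mul_one_div_cancel hα.ne', one_mul, Real.exp_log (div_pos h1 h2)]

lemma exp_neg_hcomp (α s : ℝ) (hα : 0 < α) (hs : s ∈ Set.Ioo (-1 : ℝ) 1) :
    Real.exp (-α * hcomp α s) = (1 - s) / (1 + s) := by
  rw [neg_mul, Real.exp_neg, exp_hcomp α s hα hs, inv_div]

lemma hcomp_neg (α s : ℝ) : hcomp α (-s) = -hcomp α s := by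
  unfold hcomp
  rw [← mul_neg, ← Real.log_inv, inv_div]
  simp [sub_eq_add_neg]

lemma hcomp_tendsto_top (α : ℝ) (hα : 0 < α) : Tendsto (hcomp α) (𝓝[<] 1) atTop := by
  unfold hcomp
  refine Tendsto.const_mul_atTop (by positivity) (Real.tendsto_log_atTop.comp ?_)
  have h0 : Tendsto (fun s : ℝ => 1 - s) (𝓝[<] 1) (𝓝[>] 0) := by
    refine tendsto_nhdsWithin_iff.2 ⟨?_, ?_⟩
    · have : Tendsto (fun s : ℝ => 1 - s) (𝓝 1) (𝓝 (1 - 1)) := Continuous.tendsto (by fun_prop) _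
      rw [sub_self] at this
      exact this.mono_left nhdsWithin_le_nhds
    · filter_upwards [self_mem_nhdsWithin] with s hs
      have hs1 : s < 1 := hs
      simpa using hs1
  have h2 : Tendsto (fun s : ℝ => 1 + s) (𝓝[<] 1) (𝓝 (1 + 1)) :=
    (Continuous.tendsto (by fun_prop) _).mono_left nhdsWithin_le_nhds
  exact h2.pos_mul_atTop (by norm_num) (tendsto_inv_nhdsGT_zero.comp h0)

lemma hcomp_tendsto_bot (α : ℝ) (hα : 0 < α) : Tendsto (hcomp α) (𝓝[>] (-1)) atBot := by
  have h0 : Tendsto (fun s : ℝ => -s) (𝓝[>] (-1)) (𝓝[<] 1) := by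
    have := tendsto_neg_nhdsGT (a := (-1 : ℝ))
    rwa [neg_neg] at this
  have := tendsto_neg_atTop_atBot.comp ((hcomp_tendsto_top α hα).comp h0)
  refine this.congr fun s => ?_
  simp [hcomp_neg]

lemma exp_limit_top (α ρ : ℝ) (h : α ≤ ρ) :
    ∃ l : ℝ, Tendsto (fun τ => Real.exp ((α - ρ) * τ)) atTop (𝓝 l) := by
  rcases eq_or_lt_of_le h with h | h
  · exact ⟨1, by simp [h]⟩
  · exact ⟨0, Real.tendsto_exp_atBot.comp (tendsto_id.const_mul_atTop_of_neg (by linarith))⟩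

lemma exp_limit_bot (α ρ : ℝ) (h : α ≤ ρ) :
    ∃ l : ℝ, Tendsto (fun τ => Real.exp ((ρ - α) * τ)) atBot (𝓝 l) := by
  rcases eq_or_lt_of_le h with h | h
  · exact ⟨1, by simp [h]⟩
  · exact ⟨0, Real.tendsto_exp_atBot.comp (tendsto_id.const_mul_atBot (by linarith))⟩

lemma compInput_contDiffOn {d : ℕ} (Λ : ℝ → Fin d → ℝ) (ρ : ℝ)
    (hΛ : ContDiff ℝ 1 Λ) (hbac : ExpBiAsympConst Λ ρ) (lp lm : Fin d → ℝ)
    (hp : Tendsto Λ atTop (𝓝 lp)) (hm : Tendsto Λ atBot (𝓝 lm))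
    (α : ℝ) (hα : 0 < α) (hαρ : α ≤ ρ) :
    ContDiffOn ℝ 1 (compInput Λ lp lm α) (Set.Icc (-1) 1) := by
  have hlt : (-1 : ℝ) < 1 := by norm_num
  have heq : ∀ s ∈ Set.Ioo (-1 : ℝ) 1, compInput Λ lp lm α s = Λ (hcomp α s) := by
    intro s hs
    simp [compInput, hs.1.ne', hs.2.ne]
  have heq' : ∀ s ∈ Set.Ioo (-1 : ℝ) 1,
      compInput Λ lp lm α =ᶠ[𝓝 s] fun t => Λ (hcomp α t) := by
    intro s hs
    filter_upwards [Ioo_mem_nhds hs.1 hs.2] with t ht using heq t ht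
  have hder : ∀ s ∈ Set.Ioo (-1 : ℝ) 1, deriv (compInput Λ lp lm α) s =
      ((1 / α) * (2 / ((1 + s) * (1 - s)))) • deriv Λ (hcomp α s) := by
    intro s hs
    rw [(heq' s hs).deriv_eq]
    exact (HasDerivAt.scomp s ((hΛ.differentiable (by norm_num)) _).hasDerivAt
      (hcomp_hasDerivAt α s hs)).deriv
  obtain ⟨⟨Lp, hLp⟩, ⟨Lm, hLm⟩⟩ := hbac
  obtain ⟨ep, hep⟩ := exp_limit_top α ρ hαρ
  obtain ⟨em, hem⟩ := exp_limit_bot α ρ hαρ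
  refine contDiffOn_Icc_of_limits _ ?_ ?_ ?_
    (((1 / α) * (2 / (1 + 1) ^ 2)) • (ep • Lp))
    (((1 / α) * (2 / (1 - (-1)) ^ 2)) • (em • Lm)) ?_ ?_
  · intro s hs
    exact ((hΛ.contDiffAt).comp s (hcomp_contDiffAt α s hs)).congr_of_eventuallyEq (heq' s hs)
  · have h1 : compInput Λ lp lm α 1 = lp := by simp [compInput]
    rw [h1]
    refine (hp.comp (hcomp_tendsto_top α hα)).congr' ?_
    filter_upwards [Ioo_mem_nhdsLT hlt] with s hs using (heq s hs).symm
  · have h1 : compInput Λ lp lm α (-1) = lm := by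
      simp [compInput, show (-1 : ℝ) ≠ 1 by norm_num]
    rw [h1]
    refine (hm.comp (hcomp_tendsto_bot α hα)).congr' ?_
    filter_upwards [Ioo_mem_nhdsGT hlt] with s hs using (heq s hs).symm
  · have hA : Tendsto (fun s : ℝ => (1 / α) * (2 / (1 + s) ^ 2)) (𝓝[<] 1)
        (𝓝 ((1 / α) * (2 / (1 + 1) ^ 2))) := by
      refine Tendsto.mono_left ?_ nhdsWithin_le_nhds
      have : ContinuousAt (fun s : ℝ => (1 / α) * (2 / (1 + s) ^ 2)) 1 := by
        refine continuousAt_const.mul (continuousAt_const.div (by fun_prop) (by norm_num))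
      exact this
    refine (hA.smul ((hep.smul hLp).comp (hcomp_tendsto_top α hα))).congr' ?_
    filter_upwards [Ioo_mem_nhdsLT hlt] with s hs
    have h1 : 0 < 1 + s := by linarith [hs.1]
    have h2 : 0 < 1 - s := by linarith [hs.2]
    rw [hder s hs]
    simp only [Function.comp_apply, smul_smul]
    congr 1
    rw [mul_assoc, ← Real.exp_add, ← add_mul, sub_add_cancel, exp_hcomp α s hα hs]
    field_simp
  · have hA : Tendsto (fun s : ℝ => (1 / α) * (2 / (1 - s) ^ 2)) (𝓝[>] (-1))
        (𝓝 ((1 / α) * (2 / (1 - (-1)) ^ 2))) := by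
      refine Tendsto.mono_left ?_ nhdsWithin_le_nhds
      have : ContinuousAt (fun s : ℝ => (1 / α) * (2 / (1 - s) ^ 2)) (-1) := by
        refine continuousAt_const.mul (continuousAt_const.div (by fun_prop) (by norm_num))
      exact this
    refine (hA.smul ((hem.smul hLm).comp (hcomp_tendsto_bot α hα))).congr' ?_
    filter_upwards [Ioo_mem_nhdsGT hlt] with s hs
    have h1 : 0 < 1 + s := by linarith [hs.1]
    have h2 : 0 < 1 - s := by linarith [hs.2]
    rw [hder s hs]
    simp only [Function.comp_apply, smul_smul]
    congr 1
    rw [mul_assoc, ← Real.exp_add, ← add_mul, show ρ - α + -ρ = -α by ring,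
      exp_neg_hcomp α s hα hs]
    field_simp

/-- If `f` is C¹ and `Λ` is C¹ and exponentially bi-asymptotically constant
with decay coefficient `ρ > 0` and limits `lp`, `lm`, then for every `α ∈ (0,ρ]` and every
`r > 0` the compactified vector field `F_{r,α}` is continuously differentiable on
`ℝⁿ × [-1,1]`. -/
theorem stmt1 {n d : ℕ} (f : (Fin n → ℝ) × (Fin d → ℝ) → Fin n → ℝ)
    (hf : ContDiff ℝ 1 f)
    (Λ : ℝ → Fin d → ℝ) (ρ : ℝ) (hρ : 0 < ρ)
    (hΛ : ContDiff ℝ 1 Λ) (hbac : ExpBiAsympConst Λ ρ)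
    (lp lm : Fin d → ℝ)
    (hp : Tendsto Λ atTop (𝓝 lp)) (hm : Tendsto Λ atBot (𝓝 lm)) :
    ∀ α ∈ Set.Ioc (0 : ℝ) ρ, ∀ r > (0 : ℝ),
      ContDiffOn ℝ 1 (compField f Λ lp lm r α) (compDomain n) := by
  intro α hα r _
  have hc := compInput_contDiffOn Λ ρ hΛ hbac lp lm hp hm α hα.1 hα.2
  have hc2 : ContDiffOn ℝ 1 (fun p : (Fin n → ℝ) × ℝ => compInput Λ lp lm α p.2)
      (compDomain n) := hc.comp contDiff_snd.contDiffOn fun p hp => hp.2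
  have h1 : ContDiffOn ℝ 1 (fun p : (Fin n → ℝ) × ℝ => f (p.1, compInput Λ lp lm α p.2))
      (compDomain n) := hf.comp_contDiffOn (contDiff_fst.contDiffOn.prodMk hc2)
  unfold compField
  refine (h1.const_smul r⁻¹).prodMk (ContDiff.contDiffOn ?_)
  fun_prop
end

section
/- Let f : ℝⁿ × ℝ^d → ℝⁿ be C¹, and let Λ : ℝ → ℝ^d be C¹ and exponentially bi-asymptotically constant with decay coefficient ρ > 0, with limits λ^± at ±∞. Fix r > 0 and α with 0 < α < ρ. Then for every x₀ ∈ ℝⁿ, the Fréchet derivative of the compactified vector field F_{r,α} within ℝⁿ × [−1,1] at the point (x₀, 1) maps the vector (0, 1) ∈ ℝⁿ × ℝ to (0, −α), and at the point (x₀, −1) it maps (0, 1) to (0, α). In other words, (0,1) is an eigenvector normal to the invariant subspaces S^± = ℝⁿ × {±1}, with eigenvalue −α at s = 1 and eigenvalue +α at s = −1. -/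
open Filter Topology

theorem aux_plus {d : ℕ} (Λ : ℝ → Fin d → ℝ) (ρ : ℝ) (hΛ : ContDiff ℝ 1 Λ) (lp lm : Fin d → ℝ)
    (Lp : Fin d → ℝ) (hL : Tendsto (fun τ => Real.exp (ρ * τ) • deriv Λ τ) atTop (𝓝 Lp))
    (hp : Tendsto Λ atTop (𝓝 lp)) (α : ℝ) (hα1 : 0 < α) (hα2 : α < ρ) :
    HasDerivWithinAt (compInput Λ lp lm α) 0 (Set.Icc (-1) 1) 1 := by
  have hΛd : Differentiable ℝ Λ := hΛ.differentiable (by norm_num)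
  have hh : ∀ s ∈ Set.Ioo (-1 : ℝ) 1,
      HasDerivAt (hcomp α) ((1 / α) * (2 / ((1 + s) * (1 - s)))) s := by
    intro s hs
    have h1 : (1 + s) ≠ 0 := by linarith [hs.1]
    have h2 : (1 - s) ≠ 0 := by linarith [hs.2]
    have := (((((hasDerivAt_id s).const_add 1).div ((hasDerivAt_id s).const_sub 1) h2).log
      (div_ne_zero h1 h2)).const_mul (1 / α))
    refine this.congr_deriv ?_
    simp only [id, Pi.div_apply]
    field_simp
    ring
  have heq : ∀ s ∈ Set.Ioo (-1 : ℝ) 1, compInput Λ lp lm α s = Λ (hcomp α s) := by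
    intro s hs
    simp [compInput, hs.1.ne', hs.2.ne]
  have hd : ∀ s ∈ Set.Ioo (-1 : ℝ) 1, HasDerivAt (compInput Λ lp lm α)
      (((1 / α) * (2 / ((1 + s) * (1 - s)))) • deriv Λ (hcomp α s)) s := by
    intro s hs
    have := (hΛd (hcomp α s)).hasDerivAt.scomp s (hh s hs)
    refine this.congr_of_eventuallyEq ?_
    filter_upwards [isOpen_Ioo.mem_nhds hs] with t ht
    exact heq t ht
  have hmem : Set.Ioo (-1 : ℝ) 1 ∈ 𝓝[<] (1 : ℝ) := Ioo_mem_nhdsLT (by norm_num)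
  have hlim : Tendsto (hcomp α) (𝓝[<] 1) atTop := by
    have a : Tendsto (fun s : ℝ => 1 + s) (𝓝[<] 1) (𝓝 (1 + 1)) :=
      tendsto_nhdsWithin_of_tendsto_nhds (Continuous.tendsto (by fun_prop) 1)
    have b : Tendsto (fun s : ℝ => 1 - s) (𝓝[<] 1) (𝓝[>] 0) := by
      refine tendsto_nhdsWithin_iff.2 ⟨?_, ?_⟩
      · have : Tendsto (fun s : ℝ => 1 - s) (𝓝[<] 1) (𝓝 (1 - 1)) :=
          tendsto_nhdsWithin_of_tendsto_nhds (Continuous.tendsto (by fun_prop) 1)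
        simpa using this
      · filter_upwards [hmem] with s hs
        simpa using hs.2
    have c := a.pos_mul_atTop (by norm_num) (tendsto_inv_nhdsGT_zero.comp b)
    exact (Real.tendsto_log_atTop.comp c).const_mul_atTop (by positivity)
  have hexp : ∀ s ∈ Set.Ioo (-1 : ℝ) 1, Real.exp (α * hcomp α s) = (1 + s) / (1 - s) := by
    intro s hs
    have h1 : 0 < 1 + s := by linarith [hs.1]
    have h2 : 0 < 1 - s := by linarith [hs.2]
    have : α * hcomp α s = Real.log ((1 + s) / (1 - s)) := by
      unfold hcomp
      field_simp
    rw [this, Real.exp_log (by positivity)]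
  have key : HasDerivWithinAt (compInput Λ lp lm α) 0 (Set.Iic 1) 1 := by
    refine hasDerivWithinAt_Iic_of_tendsto_deriv (s := Set.Ioo (-1) 1)
      (fun s hs => (hd s hs).differentiableAt.differentiableWithinAt) ?_ hmem ?_
    · have h1 : compInput Λ lp lm α 1 = lp := by simp [compInput]
      unfold ContinuousWithinAt
      rw [h1, nhdsWithin_Ioo_eq_nhdsLT (by norm_num)]
      refine (hp.comp hlim).congr' ?_
      filter_upwards [hmem] with s hs
      exact (heq s hs).symm
    · have e : Tendsto (fun τ : ℝ => Real.exp ((α - ρ) * τ)) atTop (𝓝 0) :=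
        Real.tendsto_exp_atBot.comp (tendsto_id.const_mul_atTop_of_neg (by linarith))
      have a : Tendsto (fun s : ℝ => (2 / α) * ((1 + s) ^ 2)⁻¹) (𝓝[<] 1)
          (𝓝 ((2 / α) * ((1 + 1) ^ 2)⁻¹)) := by
        refine tendsto_nhdsWithin_of_tendsto_nhds (ContinuousAt.tendsto ?_)
        refine ContinuousAt.mul continuousAt_const (ContinuousAt.inv₀ (by fun_prop) (by norm_num))
      have t := a.smul ((e.smul hL).comp hlim)
      rw [zero_smul, smul_zero] at t
      refine t.congr' ?_
      filter_upwards [hmem] with s hs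
      rw [(hd s hs).deriv]
      simp only [Function.comp, smul_smul]
      congr 1
      have h1 : 0 < 1 + s := by linarith [hs.1]
      have h2 : 0 < 1 - s := by linarith [hs.2]
      rw [mul_assoc, ← Real.exp_add, show (α - ρ) * hcomp α s + ρ * hcomp α s = α * hcomp α s by ring,
        hexp s hs]
      field_simp
  exact key.mono (fun s hs => hs.2)

theorem aux_minus {d : ℕ} (Λ : ℝ → Fin d → ℝ) (ρ : ℝ) (hΛ : ContDiff ℝ 1 Λ) (lp lm : Fin d → ℝ)
    (Lm : Fin d → ℝ) (hL : Tendsto (fun τ => Real.exp (-ρ * τ) • deriv Λ τ) atBot (𝓝 Lm))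
    (hm : Tendsto Λ atBot (𝓝 lm)) (α : ℝ) (hα1 : 0 < α) (hα2 : α < ρ) :
    HasDerivWithinAt (compInput Λ lp lm α) 0 (Set.Icc (-1) 1) (-1) := by
  have h := aux_plus (fun τ => Λ (-τ)) ρ (hΛ.comp contDiff_neg) lm lp (-Lm)
    (by
      refine ((hL.comp tendsto_neg_atTop_atBot).neg).congr ?_
      intro τ
      simp [deriv_comp_neg]) (hm.comp tendsto_neg_atTop_atBot) α hα1 hα2
  have h' : HasDerivWithinAt (compInput (fun τ => Λ (-τ)) lm lp α) 0 (Set.Icc (-1) 1) (-(-1)) := by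
    simpa using h
  have := h'.scomp (-1) (hasDerivWithinAt_neg (-1) (Set.Icc (-1) 1))
    (fun s hs => ⟨by linarith [hs.2], by linarith [hs.1]⟩)
  rw [smul_zero] at this
  have hfun : compInput Λ lp lm α = compInput (fun τ => Λ (-τ)) lm lp α ∘ Neg.neg := by
    funext s
    have hn : hcomp α (-s) = -hcomp α s := by
      unfold hcomp
      rw [← mul_neg, ← Real.log_inv, inv_div]
      ring_nf
    by_cases h1 : s = 1
    · subst h1
      norm_num [compInput]
    · by_cases h2 : s = -1
      · subst h2
        norm_num [compInput]
      · have h3 : -s ≠ 1 := fun h => h2 (by linarith)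
        have h4 : -s ≠ -1 := fun h => h1 (by linarith)
        simp only [compInput, Function.comp, if_neg h1, if_neg h2, if_neg h3, if_neg h4, hn, neg_neg]
  rw [hfun]
  exact this

theorem aux_field {n d : ℕ} (f : (Fin n → ℝ) × (Fin d → ℝ) → Fin n → ℝ)
    (hf : ContDiff ℝ 1 f) (Λ : ℝ → Fin d → ℝ) (lp lm : Fin d → ℝ) (r α s₀ : ℝ)
    (h : HasDerivWithinAt (compInput Λ lp lm α) 0 (Set.Icc (-1) 1) s₀) (x₀ : Fin n → ℝ) :
    ∃ L : ((Fin n → ℝ) × ℝ) →L[ℝ] ((Fin n → ℝ) × ℝ),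
        HasFDerivWithinAt (compField f Λ lp lm r α) L (compDomain n) (x₀, s₀) ∧
        L ((0 : Fin n → ℝ), (1 : ℝ)) = ((0 : Fin n → ℝ), -α * s₀) := by
  have hfd : Differentiable ℝ f := hf.differentiable (by norm_num)
  have h1 : HasFDerivWithinAt (fun p : (Fin n → ℝ) × ℝ => compInput Λ lp lm α p.2) _
      (compDomain n) (x₀, s₀) :=
    HasFDerivWithinAt.comp (g := compInput Λ lp lm α) (f := Prod.snd) (x₀, s₀)
      h.hasFDerivWithinAt hasFDerivWithinAt_snd (fun p hp => hp.2)
  have h2 := ((hfd (x₀, compInput Λ lp lm α s₀)).hasFDerivAt.comp_hasFDerivWithinAt (x₀, s₀)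
    ((hasFDerivWithinAt_fst (𝕜 := ℝ) (s := compDomain n) (p := (x₀, s₀))).prodMk h1)).const_smul r⁻¹
  have hq : HasDerivAt (fun s : ℝ => α * (1 - s ^ 2) / 2) (-α * s₀) s₀ := by
    have := ((((hasDerivAt_id s₀).pow 2).const_sub 1).const_mul α).div_const 2
    refine this.congr_deriv ?_
    simp
    ring
  have h3 : HasFDerivWithinAt (fun p : (Fin n → ℝ) × ℝ => α * (1 - p.2 ^ 2) / 2) _
      (compDomain n) (x₀, s₀) :=
    HasFDerivAt.comp_hasFDerivWithinAt (g := fun s : ℝ => α * (1 - s ^ 2) / 2) (f := Prod.snd)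
      (x₀, s₀) hq.hasFDerivAt hasFDerivWithinAt_snd
  refine ⟨_, h2.prodMk h3, ?_⟩
  have hz : (fderiv ℝ f (x₀, compInput Λ lp lm α s₀)) ((0 : Fin n → ℝ), (0 : Fin d → ℝ)) = 0 :=
    map_zero (fderiv ℝ f (x₀, compInput Λ lp lm α s₀))
  ext <;> simp [hz]

/-- For `0 < α < ρ` and `r > 0`, the Fréchet derivative of the compactified
vector field within `ℝⁿ × [-1,1]` at `(x₀, 1)` maps `(0,1)` to `(0,-α)`, and at `(x₀, -1)` it
maps `(0,1)` to `(0,α)`: `(0,1)` is an eigenvector normal to `S^±` with eigenvalue `∓α`. -/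
theorem stmt6 {n d : ℕ} (f : (Fin n → ℝ) × (Fin d → ℝ) → Fin n → ℝ)
    (hf : ContDiff ℝ 1 f)
    (Λ : ℝ → Fin d → ℝ) (ρ : ℝ) (hρ : 0 < ρ)
    (hΛ : ContDiff ℝ 1 Λ) (hbac : ExpBiAsympConst Λ ρ)
    (lp lm : Fin d → ℝ)
    (hp : Tendsto Λ atTop (𝓝 lp)) (hm : Tendsto Λ atBot (𝓝 lm))
    (r α : ℝ) (hr : 0 < r) (hα1 : 0 < α) (hα2 : α < ρ) :
    ∀ x₀ : Fin n → ℝ,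
      (∃ L : ((Fin n → ℝ) × ℝ) →L[ℝ] ((Fin n → ℝ) × ℝ),
        HasFDerivWithinAt (compField f Λ lp lm r α) L (compDomain n) (x₀, 1) ∧
        L ((0 : Fin n → ℝ), (1 : ℝ)) = ((0 : Fin n → ℝ), -α)) ∧
      (∃ L : ((Fin n → ℝ) × ℝ) →L[ℝ] ((Fin n → ℝ) × ℝ),
        HasFDerivWithinAt (compField f Λ lp lm r α) L (compDomain n) (x₀, -1) ∧
        L ((0 : Fin n → ℝ), (1 : ℝ)) = ((0 : Fin n → ℝ), α)) := by
  intro x₀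
  obtain ⟨⟨Lp, hLp⟩, ⟨Lm, hLm⟩⟩ := hbac
  constructor
  · simpa using aux_field f hf Λ lp lm r α 1 (aux_plus Λ ρ hΛ lp lm Lp hLp hp α hα1 hα2) x₀
  · simpa using aux_field f hf Λ lp lm r α (-1) (aux_minus Λ ρ hΛ lp lm Lm hLm hm α hα1 hα2) x₀
end

section
/- Let f : ℝⁿ × ℝ^d → ℝⁿ be C¹, and let Λ : ℝ → ℝ^d be C¹ and exponentially bi-asymptotically constant with decay coefficient ρ > 0, with limits λ^± at ±∞. Suppose η⁺ ∈ ℝⁿ satisfies f(η⁺, λ⁺) = 0 and the characteristic polynomial of D_x f(η⁺, λ⁺) has exactly one complex root (counted with multiplicity) with positive real part, and all of its remaining complex roots have negative real part. Then for every r > 0 and α ∈ (0, ρ], the characteristic polynomial of the Fréchet derivative of F_{r,α} at (η⁺, 1) (within ℝⁿ × [−1,1]) has exactly one complex root (with multiplicity) with positive real part, and all of its remaining n complex roots have negative real part. -/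
open Filter Topology

/-- The multiset of complex roots (with multiplicity) of a real polynomial. -/
noncomputable def complexRoots (p : Polynomial ℝ) : Multiset ℂ :=
  (p.map (algebraMap ℝ ℂ)).roots

lemma aux_charpoly_smul {n : ℕ} (A : (Fin n → ℝ) →ₗ[ℝ] (Fin n → ℝ)) (c : ℝ) (hc : c ≠ 0) :
    (c • A).charpoly = A.charpoly.scaleRoots c := by
  rw [← LinearMap.charpoly_toMatrix A (Pi.basisFun ℝ (Fin n)),
    ← LinearMap.charpoly_toMatrix (c • A) (Pi.basisFun ℝ (Fin n)), map_smul]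
  set M := LinearMap.toMatrix (Pi.basisFun ℝ (Fin n)) (Pi.basisFun ℝ (Fin n)) A
  apply Polynomial.funext
  intro x
  have hx : x = (x / c) * c := by field_simp
  have h2 := Polynomial.scaleRoots_eval_mul M.charpoly (x / c) c
  rw [mul_comm c, ← hx] at h2
  rw [h2, Matrix.eval_charpoly, Matrix.eval_charpoly, Matrix.charpoly_natDegree_eq_dim,
    ← Matrix.det_smul]
  congr 1
  ext i j
  simp [Matrix.scalar_apply, Matrix.diagonal_apply]
  split_ifs
  · field_simp
  · ring

lemma aux_charpoly_block {n : ℕ} (A : (Fin n → ℝ) →ₗ[ℝ] (Fin n → ℝ)) (w : Fin n → ℝ) (b : ℝ)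
    (L : ((Fin n → ℝ) × ℝ) →ₗ[ℝ] ((Fin n → ℝ) × ℝ))
    (hL : ∀ p, L p = (A p.1 + p.2 • w, b * p.2)) :
    L.charpoly = A.charpoly * (Polynomial.X - Polynomial.C b) := by
  rw [← LinearMap.charpoly_toMatrix A (Pi.basisFun ℝ (Fin n)),
    ← LinearMap.charpoly_toMatrix L ((Pi.basisFun ℝ (Fin n)).prod (Module.Basis.singleton Unit ℝ))]
  have : LinearMap.toMatrix ((Pi.basisFun ℝ (Fin n)).prod (Module.Basis.singleton Unit ℝ))
      ((Pi.basisFun ℝ (Fin n)).prod (Module.Basis.singleton Unit ℝ)) L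
      = Matrix.fromBlocks
        (LinearMap.toMatrix (Pi.basisFun ℝ (Fin n)) (Pi.basisFun ℝ (Fin n)) A)
        (Matrix.of fun i _ => w i) 0 (Matrix.of fun _ _ => b) := by
    ext (i | i) (j | j) <;> simp [LinearMap.toMatrix_apply, hL]
  rw [this, Matrix.charpoly_fromBlocks_zero₂₁]
  congr 1
  simp [Matrix.charpoly, Matrix.charmatrix]

lemma aux_roots {n : ℕ} (A : (Fin n → ℝ) →ₗ[ℝ] (Fin n → ℝ)) (c : ℝ) (hc : 0 < c) (α : ℝ)
    (hα : 0 < α) (w : Fin n → ℝ)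
    (hpos : (Multiset.filter (fun z : ℂ => 0 < z.re) (complexRoots A.charpoly)).card = 1)
    (hneg : (Multiset.filter (fun z : ℂ => z.re < 0) (complexRoots A.charpoly)).card = n - 1)
    (L : ((Fin n → ℝ) × ℝ) →ₗ[ℝ] ((Fin n → ℝ) × ℝ))
    (hL : ∀ p, L p = ((c • A) p.1 + p.2 • w, (-α) * p.2)) :
    (Multiset.filter (fun z : ℂ => 0 < z.re) (complexRoots L.charpoly)).card = 1 ∧
    (Multiset.filter (fun z : ℂ => z.re < 0) (complexRoots L.charpoly)).card = n := by
  have hn : 1 ≤ n := by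
    have h1 : (complexRoots A.charpoly).card ≤ n := by
      refine (Polynomial.card_roots' _).trans ?_
      refine Polynomial.natDegree_map_le.trans ?_
      rw [LinearMap.charpoly_natDegree]; simp
    have h2 := Multiset.card_le_card
      (Multiset.filter_le (fun z : ℂ => 0 < z.re) (complexRoots A.charpoly))
    omega
  have hr : complexRoots L.charpoly
      = (complexRoots A.charpoly).map (fun z => (c : ℂ) * z) + {((-α : ℝ) : ℂ)} := by
    rw [aux_charpoly_block _ _ _ L hL, aux_charpoly_smul A c hc.ne']
    unfold complexRoots
    have hm : (A.charpoly.map (algebraMap ℝ ℂ)) ≠ 0 :=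
      Polynomial.map_ne_zero (LinearMap.charpoly_monic A).ne_zero
    have hcc : IsUnit (c : ℂ) := by
      rw [isUnit_iff_ne_zero]; exact_mod_cast hc.ne'
    rw [Polynomial.map_mul, Polynomial.map_scaleRoots _ _ _
      (by simp [(LinearMap.charpoly_monic A).leadingCoeff]), Polynomial.roots_mul]
    · congr 1
      · exact Polynomial.roots_scaleRoots _ hcc
      · rw [Polynomial.map_sub, Polynomial.map_X, Polynomial.map_C, Polynomial.roots_X_sub_C]
        rfl
    · refine mul_ne_zero (Polynomial.scaleRoots_ne_zero hm _) ?_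
      rw [Polynomial.map_sub, Polynomial.map_X, Polynomial.map_C]
      exact Polynomial.X_sub_C_ne_zero _
  have hcn : ∀ x : ℝ, c * x < 0 ↔ x < 0 := fun x =>
    ⟨fun h => by by_contra h'; nlinarith, fun h => mul_neg_of_pos_of_neg hc h⟩
  rw [hr]
  simp only [Multiset.filter_add, Multiset.filter_map, Multiset.card_add, Multiset.card_map,
    Function.comp_def, Complex.re_ofReal_mul, Multiset.filter_singleton, Complex.ofReal_re,
    mul_pos_iff_of_pos_left hc, hcn, hpos, hneg]
  constructor
  · simp [hα.le]
  · simp [hα]; omega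

lemma aux_compInput {d : ℕ} (Λ : ℝ → Fin d → ℝ) (ρ : ℝ) 
    (hΛ : ContDiff ℝ 1 Λ) (hbac : ExpBiAsympConst Λ ρ) (lp lm : Fin d → ℝ)
    (hp : Tendsto Λ atTop (𝓝 lp)) (α : ℝ) (hα : 0 < α) (hαρ : α ≤ ρ) :
    ∃ v, HasDerivWithinAt (compInput Λ lp lm α) v (Set.Icc (-1) 1) 1 := by
  obtain ⟨⟨Lp, hLp⟩, -⟩ := hbac
  obtain ⟨K, hK⟩ : ∃ K, Tendsto (fun τ => Real.exp (α * τ) • deriv Λ τ) atTop (𝓝 K) := by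
    have key : (fun τ => Real.exp (α * τ) • deriv Λ τ)
        = fun τ => Real.exp (-((ρ - α) * τ)) • (Real.exp (ρ * τ) • deriv Λ τ) := by
      funext τ
      rw [smul_smul, ← Real.exp_add]; congr 2; ring
    rw [key]
    rcases hαρ.eq_or_lt with h | h
    · subst h; exact ⟨Lp, by simpa using hLp⟩
    · refine ⟨(0 : ℝ) • Lp, Tendsto.smul ?_ hLp⟩
      exact Real.tendsto_exp_neg_atTop_nhds_zero.comp
        (tendsto_id.const_mul_atTop (sub_pos.2 h))
  have hh : Tendsto (hcomp α) (𝓝[<] 1) atTop := by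
    unfold hcomp
    refine Tendsto.const_mul_atTop (by positivity) (Real.tendsto_log_atTop.comp ?_)
    have h1 : Tendsto (fun s : ℝ => 1 + s) (𝓝[<] 1) (𝓝 (1 + 1)) :=
      ((continuous_const.add continuous_id).tendsto 1).mono_left nhdsWithin_le_nhds
    have h2 : Tendsto (fun s : ℝ => (1 - s)⁻¹) (𝓝[<] 1) atTop := by
      refine tendsto_inv_nhdsGT_zero.comp (tendsto_nhdsWithin_iff.2 ⟨?_, ?_⟩)
      · have hcont : Continuous (fun s : ℝ => 1 - s) := by fun_prop
        have := hcont.tendsto 1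
        simp only [sub_self] at this
        exact this.mono_left nhdsWithin_le_nhds
      · filter_upwards [self_mem_nhdsWithin] with s hs
        simpa using hs
    exact h1.pos_mul_atTop (by norm_num) h2
  have hI : Set.Ioo (-1 : ℝ) 1 ∈ 𝓝[<] (1 : ℝ) := Ioo_mem_nhdsLT (by norm_num)
  have hE : ∀ s ∈ Set.Ioo (-1 : ℝ) 1, compInput Λ lp lm α s = Λ (hcomp α s) := by
    intro s hs
    simp [compInput, hs.2.ne, hs.1.ne']
  have hD : ∀ s ∈ Set.Ioo (-1 : ℝ) 1, HasDerivAt (compInput Λ lp lm α)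
      ((2 / (α * (1 + s) ^ 2)) • (Real.exp (α * hcomp α s) • deriv Λ (hcomp α s))) s := by
    intro s hs
    have p1 : 0 < 1 + s := by linarith [hs.1]
    have p2 : 0 < 1 - s := by linarith [hs.2]
    have d1 : HasDerivAt (hcomp α) ((1 / α) * ((1 * (1 - s) - (1 + s) * (-1)) / (1 - s) ^ 2
        / ((1 + s) / (1 - s)))) s := by
      have a1 : HasDerivAt (fun s : ℝ => 1 + s) 1 s := (hasDerivAt_id s).const_add 1
      have a2 : HasDerivAt (fun s : ℝ => 1 - s) (-1) s := (hasDerivAt_id s).const_sub 1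
      exact (((a1.div a2 p2.ne').log (div_pos p1 p2).ne').const_mul (1 / α))
    have d2 : HasDerivAt Λ (deriv Λ (hcomp α s)) (hcomp α s) :=
      (hΛ.differentiable (by norm_num) _).hasDerivAt
    have d3 := d2.scomp s d1
    have hexp : Real.exp (α * hcomp α s) = (1 + s) / (1 - s) := by
      unfold hcomp
      rw [← mul_assoc, mul_one_div_cancel hα.ne', one_mul, Real.exp_log (div_pos p1 p2)]
    refine (d3.congr_deriv ?_).congr_of_eventuallyEq ?_
    · rw [hexp, smul_smul]
      congr 1
      field_simp
      ring
    · filter_upwards [isOpen_Ioo.mem_nhds hs] with t ht using hE t ht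
  refine ⟨(2 / (α * (1 + 1) ^ 2)) • K, ?_⟩
  refine HasDerivWithinAt.mono ?_ Set.Icc_subset_Iic_self
  refine hasDerivWithinAt_Iic_of_tendsto_deriv (s := Set.Ioo (-1) 1)
    (fun s hs => (hD s hs).differentiableAt.differentiableWithinAt) ?_ hI ?_
  · have h1 : compInput Λ lp lm α 1 = lp := by simp [compInput]
    rw [ContinuousWithinAt, h1]
    have : Tendsto (compInput Λ lp lm α) (𝓝[<] 1) (𝓝 lp) := by
      refine (hp.comp hh).congr' ?_
      filter_upwards [hI] with s hs using (hE s hs).symm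
    exact this.mono_left (nhdsWithin_mono _ Set.Ioo_subset_Iio_self)
  · have : Tendsto (fun s => (2 / (α * (1 + s) ^ 2)) •
        (Real.exp (α * hcomp α s) • deriv Λ (hcomp α s))) (𝓝[<] 1)
        (𝓝 ((2 / (α * (1 + 1) ^ 2)) • K)) := by
      refine Tendsto.smul ?_ (hK.comp hh)
      have : ContinuousAt (fun s : ℝ => 2 / (α * (1 + s) ^ 2)) 1 := by
        refine ContinuousAt.div (by fun_prop) (by fun_prop) (by positivity)
      exact this.tendsto.mono_left nhdsWithin_le_nhds
    refine this.congr' ?_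
    filter_upwards [hI] with s hs using (hD s hs).deriv.symm

/-- If `η⁺` is a regular edge state of the future limit system (the
characteristic polynomial of `D_x f(η⁺,λ⁺)` has exactly one complex root, with multiplicity,
of positive real part and its remaining `n-1` roots have negative real part), then for every
`r > 0` and `α ∈ (0,ρ]`, the characteristic polynomial of the derivative of `F_{r,α}` at
`(η⁺,1)` has exactly one complex root of positive real part and its remaining `n` complex
roots all have negative real part. -/
theorem stmt9 {n d : ℕ} (f : (Fin n → ℝ) × (Fin d → ℝ) → Fin n → ℝ)
    (hf : ContDiff ℝ 1 f)
    (Λ : ℝ → Fin d → ℝ) (ρ : ℝ) (hρ : 0 < ρ)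
    (hΛ : ContDiff ℝ 1 Λ) (hbac : ExpBiAsympConst Λ ρ)
    (lp lm : Fin d → ℝ)
    (hp : Tendsto Λ atTop (𝓝 lp)) (hm : Tendsto Λ atBot (𝓝 lm))
    (ηp : Fin n → ℝ) (heq : f (ηp, lp) = 0)
    (hpos : (Multiset.filter (fun z : ℂ => 0 < z.re)
        (complexRoots (fderiv ℝ (fun x => f (x, lp)) ηp).toLinearMap.charpoly)).card = 1)
    (hneg : (Multiset.filter (fun z : ℂ => z.re < 0)
        (complexRoots (fderiv ℝ (fun x => f (x, lp)) ηp).toLinearMap.charpoly)).card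
        = n - 1) :
    ∀ r > (0 : ℝ), ∀ α ∈ Set.Ioc (0 : ℝ) ρ,
      ∃ L : ((Fin n → ℝ) × ℝ) →L[ℝ] ((Fin n → ℝ) × ℝ),
        HasFDerivWithinAt (compField f Λ lp lm r α) L (compDomain n) (ηp, 1) ∧
        (Multiset.filter (fun z : ℂ => 0 < z.re)
          (complexRoots L.toLinearMap.charpoly)).card = 1 ∧
        (Multiset.filter (fun z : ℂ => z.re < 0)
          (complexRoots L.toLinearMap.charpoly)).card = n := by
  intro r hr α hα
  obtain ⟨v, hv⟩ := aux_compInput Λ ρ hΛ hbac lp lm hp α hα.1 hα.2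
  have hfd : HasFDerivAt f (fderiv ℝ f (ηp, lp)) (ηp, lp) :=
    (hf.differentiable (by norm_num) _).hasFDerivAt
  set G := fderiv ℝ f (ηp, lp) with hG
  have hA : fderiv ℝ (fun x => f (x, lp)) ηp = G.comp (ContinuousLinearMap.inl ℝ _ _) :=
    (hfd.comp ηp (hasFDerivAt_prodMk_left ηp lp)).fderiv
  have h1 : compInput Λ lp lm α 1 = lp := by simp [compInput]
  have hs : HasFDerivWithinAt (fun p : (Fin n → ℝ) × ℝ => compInput Λ lp lm α p.2)
      ((ContinuousLinearMap.toSpanSingleton ℝ v).comp (ContinuousLinearMap.snd ℝ (Fin n → ℝ) ℝ))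
      (compDomain n) (ηp, 1) := by
    refine HasFDerivWithinAt.comp (f := Prod.snd) (t := Set.Icc (-1) 1) (ηp, (1 : ℝ))
      hv.hasFDerivWithinAt hasFDerivWithinAt_snd ?_
    intro p hp
    exact hp.2
  have hpair := (hasFDerivWithinAt_fst (𝕜 := ℝ) (p := (ηp, (1 : ℝ)))
    (s := compDomain n)).prodMk hs
  have hfd' : HasFDerivAt f G (((ηp, (1 : ℝ)) : (Fin n → ℝ) × ℝ).1,
      compInput Λ lp lm α ((ηp, (1 : ℝ)) : (Fin n → ℝ) × ℝ).2) := by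
    simpa [h1] using hfd
  have hc1 := (hfd'.comp_hasFDerivWithinAt (ηp, (1 : ℝ)) hpair).const_smul r⁻¹
  have hq : HasDerivAt (fun s : ℝ => α * (1 - s ^ 2) / 2) (-α) 1 := by
    have := ((((hasDerivAt_id (1 : ℝ)).pow 2).const_sub 1).const_mul α).div_const 2
    refine this.congr_deriv ?_
    simp
    ring
  have hc2 : HasFDerivWithinAt (fun p : (Fin n → ℝ) × ℝ => α * (1 - p.2 ^ 2) / 2)
      ((ContinuousLinearMap.toSpanSingleton ℝ (-α)).comp
        (ContinuousLinearMap.snd ℝ (Fin n → ℝ) ℝ)) (compDomain n) (ηp, 1) :=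
    HasFDerivAt.comp_hasFDerivWithinAt (ηp, (1 : ℝ)) (f := Prod.snd)
      (hq.hasFDerivAt) hasFDerivWithinAt_snd
  refine ⟨_, hc1.prodMk hc2, ?_⟩
  refine aux_roots _ r⁻¹ (inv_pos.2 hr) α hα.1 (r⁻¹ • G (0, v)) hpos hneg _ ?_
  rintro ⟨x, s⟩
  have hsplit : G (x, s • v) = G (x, 0) + s • G (0, v) := by
    rw [← map_smul, ← map_add]; simp
  rw [hA]
  simp [hsplit, smul_comm s, mul_comm]
end

section
/- Let f : ℝⁿ × ℝ^d → ℝⁿ be C¹, and let Λ : ℝ → ℝ^d be C¹ and exponentially bi-asymptotically constant with decay coefficient ρ > 0, with limits λ^± at ±∞. Suppose e⁻ ∈ ℝⁿ satisfies f(e⁻, λ⁻) = 0 and every complex root of the characteristic polynomial of D_x f(e⁻, λ⁻) has negative real part. Then for every r > 0 and α ∈ (0, ρ], the characteristic polynomial of the Fréchet derivative of F_{r,α} at (e⁻, −1) (within ℝⁿ × [−1,1]) has exactly one complex root with positive real part, namely the simple root α, and its remaining n complex roots all have negative real part. -/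
open Filter Topology

theorem aux_deriv {d : ℕ} (Λ : ℝ → Fin d → ℝ) (ρ : ℝ) 
    (hΛ : ContDiff ℝ 1 Λ) (hbac : ExpBiAsympConst Λ ρ)
    (lp lm : Fin d → ℝ) (hm : Tendsto Λ atBot (𝓝 lm)) (α : ℝ) (hα : α ∈ Set.Ioc (0 : ℝ) ρ) :
    ∃ v, HasDerivWithinAt (compInput Λ lp lm α) v (Set.Icc (-1) 1) (-1) := by
  obtain ⟨-, Lm, hLm⟩ := hbac
  obtain ⟨hα0, hαρ⟩ := hα
  -- the rescaled derivative converges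
  have h1 : ∃ w : Fin d → ℝ, Tendsto (fun τ => Real.exp (-α * τ) • deriv Λ τ) atBot (𝓝 w) := by
    rcases hαρ.eq_or_lt with h | h
    · subst h; exact ⟨Lm, hLm⟩
    · refine ⟨(0 : ℝ) • Lm, ?_⟩
      have h2 : Tendsto (fun τ : ℝ => Real.exp ((ρ - α) * τ)) atBot (𝓝 0) :=
        Real.tendsto_exp_atBot.comp (tendsto_id.const_mul_atBot (sub_pos.2 h))
      refine (h2.smul hLm).congr fun τ => ?_
      rw [smul_smul, ← Real.exp_add]; congr 2; ring
  obtain ⟨w, hw⟩ := h1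
  -- the inverse map tends to minus infinity
  have hquot : Tendsto (fun s : ℝ => (1 + s) / (1 - s)) (𝓝[>] (-1)) (𝓝[>] 0) := by
    refine tendsto_nhdsWithin_iff.2 ⟨?_, ?_⟩
    · have : ContinuousAt (fun s : ℝ => (1 + s) / (1 - s)) (-1) := by
        apply ContinuousAt.div <;> first | fun_prop | norm_num
      have := this.tendsto
      norm_num at this
      exact this.mono_left nhdsWithin_le_nhds
    · filter_upwards [Ioo_mem_nhdsGT (show (-1:ℝ) < 0 by norm_num)] with s hs
      have hs1 : 0 < 1 + s := by linarith [hs.1]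
      have hs2 : 0 < 1 - s := by linarith [hs.2]
      exact div_pos hs1 hs2
  have hh : Tendsto (hcomp α) (𝓝[>] (-1)) atBot :=
    (Real.tendsto_log_nhdsGT_zero.comp hquot).const_mul_atBot (by positivity)
  have hder : ∀ s ∈ Set.Ioo (-1 : ℝ) 0, HasDerivAt (compInput Λ lp lm α)
      ((2 / α / (1 - s) ^ 2) • (Real.exp (-α * hcomp α s) • deriv Λ (hcomp α s))) s := by
    intro s hs
    have hs1 : 0 < 1 + s := by linarith [hs.1]
    have hs2 : 0 < 1 - s := by linarith [hs.2]
    have hq : HasDerivAt (fun s : ℝ => (1 + s) / (1 - s)) 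
        ((1 * (1 - s) - (1 + s) * (-1)) / (1 - s)^2) s :=
      ((hasDerivAt_id s).const_add 1).div ((hasDerivAt_id s).const_sub 1) hs2.ne'
    have hhd : HasDerivAt (hcomp α) _ s :=
      (hq.log (div_pos hs1 hs2).ne').const_mul (1 / α)
    have hΛd : HasDerivAt Λ (deriv Λ (hcomp α s)) (hcomp α s) :=
      ((hΛ.differentiable (by norm_num)) _).hasDerivAt
    have hc := hΛd.scomp s hhd
    have he : Real.exp (-α * hcomp α s) = (1 - s) / (1 + s) := by
      have : -α * hcomp α s = - Real.log ((1 + s) / (1 - s)) := by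
        unfold hcomp; field_simp
      rw [this, Real.exp_neg, Real.exp_log (div_pos hs1 hs2), inv_div]
    rw [he, smul_smul]
    have hcong : compInput Λ lp lm α =ᶠ[𝓝 s] Λ ∘ hcomp α := by
      filter_upwards [isOpen_Ioo.mem_nhds hs] with t ht
      simp [compInput, show t ≠ 1 by linarith [ht.2], ht.1.ne']
    refine (hc.congr_of_eventuallyEq hcong).congr_deriv ?_
    congr 1
    field_simp
    ring
  refine ⟨(2 / α / (1 - (-1)) ^ 2 : ℝ) • w, ?_⟩
  refine HasDerivWithinAt.mono ?_ (Set.Icc_subset_Ici_self)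
  have hmem : Set.Ioo (-1 : ℝ) 0 ∈ 𝓝[>] (-1 : ℝ) := Ioo_mem_nhdsGT (by norm_num)
  refine hasDerivWithinAt_Ici_of_tendsto_deriv (s := Set.Ioo (-1) 0)
    (fun s hs => (hder s hs).differentiableAt.differentiableWithinAt) ?_ hmem ?_
  · have : compInput Λ lp lm α (-1) = lm := by norm_num [compInput]
    rw [ContinuousWithinAt, this]
    have h3 := (hm.comp hh).mono_left (nhdsWithin_mono (-1 : ℝ) (Set.Ioo_subset_Ioi_self : Set.Ioo (-1 : ℝ) 0 ⊆ _))
    refine h3.congr' ?_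
    filter_upwards [self_mem_nhdsWithin] with t ht
    have : t ≠ 1 := by intro h; linarith [ht.2]
    simp [compInput, this, ht.1.ne']
  · have hcont : Tendsto (fun s : ℝ => 2 / α / (1 - s) ^ 2) (𝓝[>] (-1)) 
        (𝓝 (2 / α / (1 - (-1)) ^ 2)) := by
      have : ContinuousAt (fun s : ℝ => 2 / α / (1 - s) ^ 2) (-1) := by
        apply ContinuousAt.div <;> first | fun_prop | norm_num
      exact this.tendsto.mono_left nhdsWithin_le_nhds
    refine (hcont.smul (hw.comp hh)).congr' ?_
    filter_upwards [hmem] with s hs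
    exact (hder s hs).deriv.symm

theorem aux_roots_s10 {n : ℕ} (A : (Fin n → ℝ) →L[ℝ] (Fin n → ℝ)) (B : ℝ →L[ℝ] (Fin n → ℝ))
    (c α : ℝ) (hc : 0 < c) 
    (hA : ∀ z ∈ complexRoots A.toLinearMap.charpoly, z.re < 0)
    (L : ((Fin n → ℝ) × ℝ) →L[ℝ] ((Fin n → ℝ) × ℝ))
    (hL : ∀ p, L p = (c • A p.1 + B p.2, α * p.2)) :
    ∃ R : Multiset ℂ, R.card = n ∧ (∀ z ∈ R, z.re < 0) ∧
      complexRoots L.toLinearMap.charpoly = (α : ℂ) ::ₘ R := by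
  set M := LinearMap.toMatrix' A.toLinearMap with hM
  have hAM : A.toLinearMap.charpoly = M.charpoly := by
    rw [hM, ← LinearMap.toMatrix_eq_toMatrix', LinearMap.charpoly_toMatrix]
  let b := (Pi.basisFun ℝ (Fin n)).prod (Module.Basis.singleton Unit ℝ)
  have hLM : LinearMap.toMatrix b b L.toLinearMap = Matrix.fromBlocks (c • M) 
      (Matrix.of fun i _ => B 1 i) 0 (Matrix.of fun _ _ => α) := by
    ext i j
    rcases i with i | i <;> rcases j with j | j <;>
      simp [b, LinearMap.toMatrix_apply, hL, hM, LinearMap.toMatrix'_apply]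
  have hch : L.toLinearMap.charpoly = (c • M).charpoly * (Polynomial.X - Polynomial.C α) := by
    rw [← LinearMap.charpoly_toMatrix _ b, hLM, Matrix.charpoly_fromBlocks_zero₂₁]
    congr 1
    simp [Matrix.charpoly, Matrix.charmatrix]
  refine ⟨complexRoots (c • M).charpoly, ?_, ?_, ?_⟩
  · rw [complexRoots, IsAlgClosed.card_roots_eq_natDegree] 
    simp
  · intro z hz
    have hzr : (z / c).re < 0 := by
      apply hA
      rw [hAM]
      unfold complexRoots at hz ⊢
      rw [Polynomial.mem_roots ((Matrix.charpoly_monic _).map _).ne_zero, Polynomial.IsRoot,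
        ← Matrix.charpoly_map, Matrix.eval_charpoly] at hz ⊢
      have : Matrix.scalar (Fin n) (z / c) - M.map (algebraMap ℝ ℂ) = 
          (c⁻¹ : ℂ) • (Matrix.scalar (Fin n) z - (c • M).map (algebraMap ℝ ℂ)) := by
        have : (c : ℂ) ≠ 0 := by exact_mod_cast hc.ne'
        ext i j
        by_cases h : i = j
        · subst h; simp; field_simp
        · simp [Matrix.diagonal_apply_ne _ h]; field_simp
      rw [this, Matrix.det_smul, hz, mul_zero]
    rw [Complex.div_ofReal_re] at hzr
    by_contra h
    exact absurd (div_nonneg (not_lt.1 h) hc.le) (not_le.2 hzr)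
  · have hne : ((c • M).charpoly.map (algebraMap ℝ ℂ)) * (Polynomial.X - Polynomial.C (α : ℂ)) ≠ 0 :=
      mul_ne_zero ((Matrix.charpoly_monic _).map _).ne_zero (Polynomial.X_sub_C_ne_zero _)
    rw [complexRoots, hch, Polynomial.map_mul, Polynomial.map_sub, Polynomial.map_X, 
      Polynomial.map_C]
    simp only [Complex.coe_algebraMap]
    erw [Polynomial.roots_mul hne]
    rw [Polynomial.roots_X_sub_C, add_comm]
    rfl

/-- If `e⁻` is a hyperbolic sink of the past limit system (all complex
eigenvalues of `D_x f(e⁻,λ⁻)` have negative real part), then for every `r > 0` and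
`α ∈ (0,ρ]`, the characteristic polynomial of the derivative of `F_{r,α}` at `(e⁻,-1)` has
exactly one complex root of positive real part, namely the simple root `α`, and its remaining
`n` complex roots all have negative real part. -/
theorem stmt10 {n d : ℕ} (f : (Fin n → ℝ) × (Fin d → ℝ) → Fin n → ℝ)
    (hf : ContDiff ℝ 1 f)
    (Λ : ℝ → Fin d → ℝ) (ρ : ℝ) (hρ : 0 < ρ)
    (hΛ : ContDiff ℝ 1 Λ) (hbac : ExpBiAsympConst Λ ρ)
    (lp lm : Fin d → ℝ)
    (hp : Tendsto Λ atTop (𝓝 lp)) (hm : Tendsto Λ atBot (𝓝 lm))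
    (em : Fin n → ℝ) (heq : f (em, lm) = 0)
    (hsink : ∀ z ∈ complexRoots
        (fderiv ℝ (fun x => f (x, lm)) em).toLinearMap.charpoly, z.re < 0) :
    ∀ r > (0 : ℝ), ∀ α ∈ Set.Ioc (0 : ℝ) ρ,
      ∃ L : ((Fin n → ℝ) × ℝ) →L[ℝ] ((Fin n → ℝ) × ℝ),
        HasFDerivWithinAt (compField f Λ lp lm r α) L (compDomain n) (em, -1) ∧
        Multiset.filter (fun z : ℂ => 0 < z.re)
          (complexRoots L.toLinearMap.charpoly) = {(α : ℂ)} ∧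
        (Multiset.filter (fun z : ℂ => z.re < 0)
          (complexRoots L.toLinearMap.charpoly)).card = n := by
  intro r hr α hα
  obtain ⟨v, hv⟩ := aux_deriv Λ ρ hΛ hbac lp lm hm α hα
  have hlm : compInput Λ lp lm α (-1) = lm := by norm_num [compInput]
  have hfd : HasFDerivAt f (fderiv ℝ f (em, lm)) (em, lm) :=
    ((hf.differentiable (by norm_num)) _).hasFDerivAt
  set D := fderiv ℝ f (em, lm) with hD
  have hA : fderiv ℝ (fun x => f (x, lm)) em = D.comp (ContinuousLinearMap.inl ℝ _ _) :=
    (hfd.comp em (hasFDerivAt_prodMk_left em lm)).fderiv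
  rw [hA] at hsink
  have hv' : HasFDerivWithinAt (fun p : (Fin n → ℝ) × ℝ => compInput Λ lp lm α p.2)
      ((ContinuousLinearMap.toSpanSingleton ℝ v).comp (ContinuousLinearMap.snd ℝ _ _))
      (compDomain n) (em, -1) :=
    HasFDerivWithinAt.comp (g := compInput Λ lp lm α) (f := Prod.snd) (t := Set.Icc (-1) 1)
      (s := compDomain n) (em, (-1 : ℝ)) hv.hasFDerivWithinAt
      hasFDerivAt_snd.hasFDerivWithinAt (fun p hp => hp.2)
  have hpair := (hasFDerivAt_fst (𝕜 := ℝ) (p := (em, (-1 : ℝ)))).hasFDerivWithinAt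
    (s := compDomain n) |>.prodMk hv'
  have hfd' : HasFDerivAt f D (em, compInput Λ lp lm α (-1)) := by rw [hlm]; exact hfd
  have h1 := (HasFDerivAt.comp_hasFDerivWithinAt (em, (-1 : ℝ)) hfd' hpair).const_smul r⁻¹
  have h2 : HasDerivAt (fun s : ℝ => α * (1 - s ^ 2) / 2) α (-1) := by
    have := ((((hasDerivAt_id (-1 : ℝ)).pow 2).const_sub 1).const_mul α).div_const 2
    refine this.congr_deriv ?_
    simp
  have h3 := (HasFDerivAt.comp (g := fun s : ℝ => α * (1 - s ^ 2) / 2) (f := Prod.snd)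
    (em, (-1 : ℝ)) h2.hasFDerivAt hasFDerivAt_snd).hasFDerivWithinAt
    (s := compDomain n)
  have h4 := h1.prodMk h3
  obtain ⟨L, h5, hL⟩ : ∃ L : ((Fin n → ℝ) × ℝ) →L[ℝ] ((Fin n → ℝ) × ℝ),
      HasFDerivWithinAt (compField f Λ lp lm r α) L (compDomain n) (em, -1) ∧
      ∀ p, L p = (r⁻¹ • (D.comp (ContinuousLinearMap.inl ℝ _ _)) p.1 +
        (r⁻¹ • (D.comp (ContinuousLinearMap.inr ℝ _ _)).comp
          (ContinuousLinearMap.toSpanSingleton ℝ v)) p.2, α * p.2) := by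
    refine ⟨_, h4, fun p => ?_⟩
    refine Prod.ext ?_ ?_
    · show r⁻¹ • D (p.1, p.2 • v) = r⁻¹ • D (p.1, 0) + r⁻¹ • D (0, p.2 • v)
      rw [← smul_add, ← map_add]; simp
    · exact mul_comm p.2 α
  obtain ⟨R, hR1, hR2, hR3⟩ := aux_roots_s10 _ _ r⁻¹ α (inv_pos.2 hr) hsink L hL
  refine ⟨L, h5, ?_, ?_⟩
  · rw [hR3, Multiset.filter_cons_of_pos _ (by simpa using hα.1),
      Multiset.filter_eq_nil.2 (fun z hz => (hR2 z hz).not_gt)]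
    rfl
  · rw [hR3, Multiset.filter_cons_of_neg _ (by simpa using hα.1.le),
      Multiset.filter_eq_self.2 hR2, hR1]
end

section
/- Let f : ℝⁿ × ℝ^d → ℝⁿ and Λ : ℝ → ℝ^d be continuous, and fix r > 0 and α > 0. A differentiable function x : ℝ → ℝⁿ satisfies the nonautonomous equation x'(τ) = f(x(τ), Λ(τ))/r for all τ ∈ ℝ if and only if the curve τ ↦ (x(τ), g_α(τ)) is a solution of the compactified system, i.e. it is differentiable and satisfies d/dτ (x(τ), s(τ)) = ( f(x(τ), Λ_α(s(τ)))/r , α(1 − s(τ)²)/2 ) for all τ ∈ ℝ, where s(τ) = g_α(τ). -/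
open Filter Topology

theorem hcomp_gcomp_aux (α : ℝ) (hα : 0 < α) (τ : ℝ) : hcomp α (gcomp α τ) = τ := by
  unfold hcomp gcomp
  have hc : 0 < Real.cosh (α * τ / 2) := Real.cosh_pos _
  have h1 : Real.cosh (α * τ / 2) + Real.sinh (α * τ / 2) = Real.exp (α * τ / 2) :=
    Real.cosh_add_sinh _
  have h2 : Real.cosh (α * τ / 2) - Real.sinh (α * τ / 2) = Real.exp (-(α * τ / 2)) :=
    Real.cosh_sub_sinh _
  have h3 : (1 + Real.tanh (α * τ / 2)) / (1 - Real.tanh (α * τ / 2)) = Real.exp (α * τ) := by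
    have e1 : 1 + Real.tanh (α * τ / 2) = Real.exp (α * τ / 2) / Real.cosh (α * τ / 2) := by
      rw [Real.tanh_eq_sinh_div_cosh, ← h1]
      field_simp
    have e2 : 1 - Real.tanh (α * τ / 2) = Real.exp (-(α * τ / 2)) / Real.cosh (α * τ / 2) := by
      rw [Real.tanh_eq_sinh_div_cosh, ← h2]
      field_simp
    rw [e1, e2, div_div_div_cancel_right₀ hc.ne', ← Real.exp_sub]
    congr 1
    ring
  rw [h3, Real.log_exp]
  field_simp

theorem gcomp_hasDerivAt_aux (α τ : ℝ) :
    HasDerivAt (fun σ => gcomp α σ) (α * (1 - (gcomp α τ) ^ 2) / 2) τ := by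
  unfold gcomp
  have hc : 0 < Real.cosh (α * τ / 2) := Real.cosh_pos _
  have hl : HasDerivAt (fun σ : ℝ => α * σ / 2) (α / 2) τ := by
    simpa using ((hasDerivAt_id τ).const_mul α).div_const 2
  have h := hl.sinh.div hl.cosh hc.ne'
  have he : (fun σ : ℝ => Real.tanh (α * σ / 2)) =
      (fun σ : ℝ => Real.sinh (α * σ / 2)) / fun σ : ℝ => Real.cosh (α * σ / 2) := by
    funext σ
    simp [Real.tanh_eq_sinh_div_cosh]
  rw [he]
  refine h.congr_deriv ?_
  rw [Real.tanh_eq_sinh_div_cosh]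
  field_simp

/-- For continuous `f`, `Λ` and fixed `r, α > 0`, a differentiable
`x : ℝ → ℝⁿ` satisfies `x'(τ) = f(x(τ),Λ(τ))/r` for all `τ` iff the curve
`τ ↦ (x(τ), g_α(τ))` solves the compactified system
`(x,s)' = (f(x, Λ(h_α(s)))/r, α(1-s²)/2)`. -/
theorem stmt11 {n d : ℕ} (f : (Fin n → ℝ) × (Fin d → ℝ) → Fin n → ℝ)
    (hf : Continuous f)
    (Λ : ℝ → Fin d → ℝ) (hΛ : Continuous Λ)
    (r α : ℝ) (hr : 0 < r) (hα : 0 < α)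
    (x : ℝ → Fin n → ℝ) (hx : Differentiable ℝ x) :
    (∀ τ : ℝ, HasDerivAt x (r⁻¹ • f (x τ, Λ τ)) τ) ↔
    (∀ τ : ℝ, HasDerivAt (fun σ => (x σ, gcomp α σ))
        ((r⁻¹ • f (x τ, Λ (hcomp α (gcomp α τ))),
          α * (1 - (gcomp α τ) ^ 2) / 2)) τ) := by
  simp only [hcomp_gcomp_aux α hα]
  constructor
  · intro h τ
    exact (h τ).prodMk (gcomp_hasDerivAt_aux α τ)
  · intro h τ
    exact (h τ).fst
end
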